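/- Let A ⊆ ℤ^d be a finite pointed set of lattice vectors with ℤA = ℤ^d, and let F be a prime face of A (the zero set in A of an integral linear functional that is nonnegative on A). If the simplicial volume of F in the lattice ℤF equals the simplicial volume of A in ℤ^d, then A is an iterated pyramid over F: there is a chain of prime faces F = F_0 ⊆ F_1 ⊆ … ⊆ F_t = A with |F_{i+1} ∖ F_i| = 1 and rank(ℤF_{i+1}) = rank(ℤF_i) + 1 for all i. -/

import Mathlib

open MeasureTheory

/-- Simplicial volume of a finite subset of `ℤ^d`, computed in the lattice it spans. -/
noncomputable def simpVol {d : ℕ} (G : Finset (Fin d → ℤ)) : ℝ :=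
  haveI : Module.Finite ℤ (Submodule.span ℤ ((G : Set (Fin d → ℤ)))) :=
    Module.Finite.span_of_finite ℤ G.finite_toSet
  let L : Submodule ℤ (Fin d → ℤ) := Submodule.span ℤ ((G : Set (Fin d → ℤ)))
  let b := Module.Free.chooseBasis ℤ L
  let coord : (Fin d → ℤ) → (Module.Free.ChooseBasisIndex ℤ L → ℝ) :=
    fun v => haveI := Classical.dec (v ∈ L)
      if h : v ∈ L then (fun i => ((b.repr ⟨v, h⟩) i : ℝ)) else 0
  (Nat.factorial (Module.finrank ℤ L)) *
    (volume (convexHull ℝ (coord '' (insert (0 : Fin d → ℤ) (G : Set (Fin d → ℤ)))))).toReal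

/-- `F` is a prime face of `A`: the zero set in `A` of an integral linear functional
that is nonnegative on `A`. -/
def IsPrimeFace {d : ℕ} (A F : Finset (Fin d → ℤ)) : Prop :=
  F ⊆ A ∧ ∃ L : (Fin d → ℤ) →ₗ[ℤ] ℤ, (∀ a ∈ A, 0 ≤ L a) ∧ ∀ a ∈ A, (a ∈ F ↔ L a = 0)


lemma inner_int (c : ℝ) (hc : 0 ≤ c) (r : ℕ) :
    ∫⁻ t : ℝ, (Set.Icc 0 c).indicator (fun t => ENNReal.ofReal ((c - t) ^ r)) t
      = ENNReal.ofReal (c ^ (r+1) / (r+1)) := by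
  rw [lintegral_indicator measurableSet_Icc, ← ofReal_integral_eq_lintegral_ofReal]
  · congr 1
    rw [integral_Icc_eq_integral_Ioc, ← intervalIntegral.integral_of_le hc,
      intervalIntegral.integral_comp_sub_left (fun t => t ^ r) c]
    simp
  · exact (Continuous.continuousOn (by fun_prop)).integrableOn_Icc
  · filter_upwards [ae_restrict_mem measurableSet_Icc] with t ht
    exact pow_nonneg (by linarith [ht.2]) _

def Δ (k : ℕ) : Set (Fin k → ℝ) := {y | (∀ i, 0 ≤ y i) ∧ ∑ i, y i ≤ 1}

lemma measΔ (k : ℕ) : MeasurableSet (Δ k) := by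
  have : IsClosed (Δ k) := by
    have : Δ k = (⋂ i, {y | 0 ≤ y i}) ∩ {y | ∑ i, y i ≤ 1} := by
      ext; simp [Δ]
    rw [this]
    refine IsClosed.inter (isClosed_iInter fun i => isClosed_le (by fun_prop) (by fun_prop)) 
      (isClosed_le (by fun_prop) (by fun_prop))
  exact this.measurableSet

lemma simplex_int (k : ℕ) : ∀ r : ℕ,
    ∫⁻ y : Fin k → ℝ, (Δ k).indicator (fun y => ENNReal.ofReal ((1 - ∑ i, y i) ^ r)) y
      = ENNReal.ofReal ((r.factorial : ℝ) / (r+k).factorial) := by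
  induction k with
  | zero =>
    intro r
    have : Δ 0 = Set.univ := by ext; simp [Δ]
    have h : (r.factorial : ℝ) ≠ 0 := by positivity
    simp [this, lintegral_unique, h, volume_pi]
  | succ k ih =>
    intro r
    have hp := (volume_preserving_piFinSuccAbove (fun _ : Fin (k+1) => ℝ) 0).symm
    rw [← hp.lintegral_comp_emb (MeasurableEquiv.measurableEmbedding _)]
    have hm : Measurable ((Δ (k+1)).indicator (fun y => ENNReal.ofReal ((1 - ∑ i, y i) ^ r))) := by
      refine Measurable.indicator (by fun_prop) (measΔ _)
    rw [Measure.volume_eq_prod, lintegral_prod_symm (fun a : ℝ × (Fin k → ℝ) => (Δ (k + 1)).indicator (fun y => ENNReal.ofReal ((1 - ∑ i, y i) ^ r))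
        ((MeasurableEquiv.piFinSuccAbove (fun _ : Fin (k+1) => ℝ) 0).symm a))
      ((hm.comp (MeasurableEquiv.piFinSuccAbove (fun _ : Fin (k+1) => ℝ) 0).symm.measurable).aemeasurable)]
    have key : ∀ y : Fin k → ℝ, (∫⁻ t : ℝ, (Δ (k+1)).indicator (fun y => ENNReal.ofReal ((1 - ∑ i, y i) ^ r))
        ((MeasurableEquiv.piFinSuccAbove (fun _ : Fin (k+1) => ℝ) 0).symm (t, y)))
        = ENNReal.ofReal (1 / (r+1)) * (Δ k).indicator (fun y => ENNReal.ofReal ((1 - ∑ i, y i) ^ (r+1))) y := by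
      intro y
      have e : ∀ t, (MeasurableEquiv.piFinSuccAbove (fun _ : Fin (k+1) => ℝ) 0).symm (t, y)
          = Fin.cons t y := by
        intro t
        simp [MeasurableEquiv.piFinSuccAbove]
        rfl
      simp only [e]
      by_cases hy : y ∈ Δ k
      · have h1 : 0 ≤ 1 - ∑ i, y i := by linarith [hy.2]
        rw [Set.indicator_of_mem hy, ← ENNReal.ofReal_mul (by positivity)]
        rw [show 1 / ((r:ℝ)+1) * (1 - ∑ i, y i) ^ (r+1) = (1 - ∑ i, y i) ^ (r+1) / (r+1) by ring,
          ← inner_int _ h1]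
        congr 1
        ext t
        by_cases ht : t ∈ Set.Icc 0 (1 - ∑ i, y i)
        · rw [Set.indicator_of_mem ht, Set.indicator_of_mem]
          · rw [Fin.sum_univ_succ]
            simp only [Fin.cons_zero, Fin.cons_succ]
            congr 2; ring
          · refine ⟨fun i => ?_, ?_⟩
            · refine Fin.cases ?_ (fun j => ?_) i
              · simpa using ht.1
              · simpa using hy.1 j
            · rw [Fin.sum_univ_succ]
              simp only [Fin.cons_zero, Fin.cons_succ]
              linarith [ht.2]
        · rw [Set.indicator_of_notMem ht, Set.indicator_of_notMem]
          intro h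
          apply ht
          have h0 := h.1 0
          have h2 := h.2
          rw [Fin.sum_univ_succ] at h2
          simp only [Fin.cons_zero, Fin.cons_succ] at h0 h2
          exact ⟨h0, by linarith⟩
      · rw [Set.indicator_of_notMem hy, mul_zero]
        rw [lintegral_eq_zero_iff' (by
          have := (hm.comp (MeasurableEquiv.piFinSuccAbove (fun _ : Fin (k+1) => ℝ) 0).symm.measurable).comp
            (measurable_prodMk_right (y := y))
          simp only [Function.comp_def, e] at this
          exact this.aemeasurable)]
        refine Filter.Eventually.of_forall fun t => ?_
        refine Set.indicator_of_notMem ?_ _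
        intro h
        apply hy
        have h0 := h.1 0
        have h2 := h.2
        rw [Fin.sum_univ_succ] at h2
        simp only [Fin.cons_zero, Fin.cons_succ] at h0 h2
        exact ⟨fun i => by simpa using h.1 i.succ, by linarith⟩
    simp only [key]
    rw [lintegral_const_mul' _ _ ENNReal.ofReal_ne_top, ih, ← ENNReal.ofReal_mul (by positivity)]
    congr 1
    rw [Nat.factorial_succ, show r + (k+1) = r + 1 + k by ring]
    push_cast
    field_simp

lemma vol_join {ι : Type} [Fintype ι] [DecidableEq ι] {k : ℕ} (C : Set (ι → ℝ)) (S : Set (ι ⊕ Fin k → ℝ))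
    (hS : Convex ℝ S) (hSc : IsClosed S)
    (hC : ∀ x ∈ C, Sum.elim x 0 ∈ S) (he : ∀ i, Pi.single (Sum.inr i) 1 ∈ S) :
    ENNReal.ofReal (((Fintype.card ι).factorial : ℝ) / (Fintype.card ι + k).factorial) * volume C
      ≤ volume S := by
  have hp := (volume_measurePreserving_sumPiEquivProdPi_symm (fun _ : ι ⊕ Fin k => ℝ))
  rw [← hp.measure_preimage_equiv, Measure.volume_eq_prod, Measure.prod_apply_symm
    ((MeasurableEquiv.measurable _) hSc.measurableSet), ← simplex_int, mul_comm]
  refine (mul_comm _ _).le.trans (lintegral_mul_const'' _ ?_).ge |>.trans ?_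
  · exact (Measurable.indicator (by fun_prop) (measΔ _)).aemeasurable
  refine lintegral_mono fun y => ?_
  by_cases hy : y ∈ Δ k
  swap
  · rw [Set.indicator_of_notMem hy]; simp
  rw [Set.indicator_of_mem hy]
  have h1 : 0 ≤ 1 - ∑ i, y i := by linarith [hy.2]
  have h2 := Measure.addHaar_smul (volume : Measure (ι → ℝ)) (1 - ∑ i, y i) C
  rw [Module.finrank_fintype_fun_eq_card, abs_of_nonneg (by positivity)] at h2
  rw [← h2]
  refine measure_mono ?_
  rintro _ ⟨x, hx, rfl⟩
  show (MeasurableEquiv.sumPiEquivProdPi _).symm (_, y) ∈ S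
  have e : (MeasurableEquiv.sumPiEquivProdPi (fun _ : ι ⊕ Fin k => ℝ)).symm ((1 - ∑ i, y i) • x, y)
      = ∑ j : Option (Fin k), (j.elim (1 - ∑ i, y i) y) • 
        (j.elim (Sum.elim x 0) (fun i => Pi.single (Sum.inr i) 1) : ι ⊕ Fin k → ℝ) := by
    rw [Fintype.sum_option]
    ext i
    rcases i with i | i
    · simp [MeasurableEquiv.sumPiEquivProdPi, Equiv.sumPiEquivProdPi, Finset.sum_apply]
    · simp [MeasurableEquiv.sumPiEquivProdPi, Equiv.sumPiEquivProdPi, Finset.sum_apply, Pi.single_apply]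
  have e2 := hS.sum_mem (t := Finset.univ) (w := fun j : Option (Fin k) => (j.elim (1 - ∑ i, y i) y))
    (z := fun j => (j.elim (Sum.elim x 0) (fun i => Pi.single (Sum.inr i) 1) : ι ⊕ Fin k → ℝ))
    (by rintro (_ | i) - <;> simp; · linarith
        exact hy.1 i) (by rw [Fintype.sum_option]; simp)
    (by rintro (_ | i) - <;> simp
        · exact hC x hx
        · exact he i)
  exact e ▸ e2

lemma convex_eq {N : Type} [Fintype N] (S K : Set (N → ℝ)) (hS : IsClosed S) (hSK : S ⊆ K) (hK : Convex ℝ K)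
   (hi : (interior K).Nonempty) (hfin : volume S ≠ ⊤) (hv : volume K ≤ volume S) : K ⊆ S := by
  have h0 : volume (K \ S) = 0 := by
    rw [measure_sdiff hSK hS.measurableSet.nullMeasurableSet hfin]
    exact tsub_eq_zero_of_le hv
  have h1 : interior K \ S = ∅ := by
    by_contra hne
    have ho : IsOpen (interior K \ S) := isOpen_interior.sdiff hS
    have := ho.measure_pos volume (Set.nonempty_iff_ne_empty.mpr hne)
    exact this.ne' (measure_mono_null (Set.sdiff_subset_sdiff_left interior_subset) h0)
  have h2 : interior K ⊆ S := Set.sdiff_eq_empty.mp h1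
  calc K ⊆ closure K := subset_closure
    _ = closure (interior K) := (hK.closure_interior_eq_closure_of_nonempty_interior hi).symm
    _ ⊆ S := hS.closure_subset_iff.mpr h2

/-- Extension of a basis of the face lattice by elements of `A`. -/
lemma exists_ext {Z n ι : Type} [AddCommGroup Z] [Finite n] [Finite ι] (bA : Module.Basis n ℤ Z)
    (A : Finset Z) (hA : Submodule.span ℤ (A : Set Z) = ⊤) (w : ι → Z) (hw : LinearIndependent ℤ w) :
    ∃ (k : ℕ) (a : Fin k → Z), (∀ i, a i ∈ A) ∧ LinearIndependent ℤ (Sum.elim w a) ∧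
      Nonempty (n ≃ ι ⊕ Fin k) := by
  classical
  let φ : Z →ₗ[ℤ] (n → ℚ) := 
    { toFun := fun v i => (bA.repr v i : ℚ)
      map_add' := by intros; ext; simp
      map_smul' := by intros; ext; simp }
  have hφ : Function.Injective φ := by
    intro u v h
    apply bA.repr.injective
    ext i
    have := congrFun h i
    simpa [φ] using this
  let v : ι ⊕ A → (n → ℚ) := Sum.elim (fun j => φ (w j)) (fun a => φ a)
  have hwQ : LinearIndependent ℚ (fun j => φ (w j)) := by
    rw [← LinearIndependent.iff_fractionRing ℤ ℚ]
    exact hw.map' φ (LinearMap.ker_eq_bot.mpr hφ)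
  have hs : LinearIndepOn ℚ v (Set.range Sum.inl) := by
    rw [linearIndepOn_range_iff Sum.inl_injective]
    exact hwQ
  obtain ⟨b, -, hsb, hspan, hli⟩ := exists_linearIndepOn_extension hs (Set.subset_univ _)
  let κ := {x : A // Sum.inr x ∈ b}
  let f : ι ⊕ κ ≃ b := 
    { toFun := Sum.elim (fun j => ⟨Sum.inl j, hsb ⟨j, rfl⟩⟩) (fun x => ⟨Sum.inr x.1, x.2⟩)
      invFun := fun x => match x with
        | ⟨Sum.inl j, _⟩ => Sum.inl j
        | ⟨Sum.inr x, h⟩ => Sum.inr ⟨x, h⟩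
      left_inv := by rintro (j | x) <;> rfl
      right_inv := by rintro ⟨(j | x), h⟩ <;> rfl }
  have htop : Submodule.span ℚ (v '' b) = ⊤ := by
    have h1 : ∀ z : Z, φ z ∈ Submodule.span ℚ (v '' b) := by
      intro z
      have hz : z ∈ Submodule.span ℤ (A : Set Z) := hA ▸ Submodule.mem_top
      induction hz using Submodule.span_induction with
      | mem x hx => exact hspan ⟨Sum.inr ⟨x, hx⟩, Set.mem_univ _, rfl⟩
      | zero => simp
      | add x y _ _ h1 h2 => rw [map_add]; exact add_mem h1 h2
      | smul c x _ h => rw [map_smul]; exact zsmul_mem h c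
    rw [eq_top_iff, ← (Pi.basisFun ℚ n).span_eq, Submodule.span_le]
    rintro _ ⟨i, rfl⟩
    have := h1 (bA i)
    have e : φ (bA i) = Pi.basisFun ℚ n i := by
      ext j
      simp [φ, Finsupp.single_apply, Pi.single_apply, eq_comm]
    exact e ▸ this
  have B : Module.Basis b ℚ (n → ℚ) := Module.Basis.mk hli (by
    rw [← htop, Set.image_eq_range])
  have hfin : Finite κ := inferInstance
  obtain ⟨k, ⟨e⟩⟩ := Finite.exists_equiv_fin κ
  refine ⟨k, fun i => (e.symm i).1, fun i => (e.symm i).1.2, ?_, ?_⟩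
  · have h2 : LinearIndependent ℚ (φ ∘ Sum.elim w (fun i => ((e.symm i).1 : Z))) := by
      have := hli.comp (f ∘ Sum.map id e.symm) (f.injective.comp (Sum.map_injective.mpr ⟨Function.injective_id, e.symm.injective⟩))
      have e' : (φ ∘ Sum.elim w (fun i => ((e.symm i).1 : Z))) = (fun x : b => v x) ∘ (f ∘ Sum.map id e.symm) := by
        ext i : 1
        rcases i with i | i <;> rfl
      rw [e']
      exact this
    exact LinearIndependent.of_comp φ (h2.restrict_scalars' ℤ)
  · exact ⟨((Pi.basisFun ℚ n).indexEquiv B).trans (f.symm.trans (Equiv.sumCongr (Equiv.refl _) e))⟩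

/-- From a dual system to the chain. -/
lemma finrank_insert {d : ℕ} (G : Set (Fin d → ℤ)) (a : Fin d → ℤ) (y : (Fin d → ℤ) →ₗ[ℤ] ℤ)
    (hG : ∀ g ∈ G, y g = 0) (ha : y a = 1) :
    Module.finrank ℤ (Submodule.span ℤ (insert a G)) = Module.finrank ℤ (Submodule.span ℤ G) + 1 := by
  have hle : Submodule.span ℤ G ≤ LinearMap.ker y := Submodule.span_le.mpr fun g hg => hG g hg
  have hinf : Submodule.span ℤ {a} ⊓ Submodule.span ℤ G = ⊥ := by
    rw [eq_bot_iff]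
    rintro x ⟨hx1, hx2⟩
    obtain ⟨c, rfl⟩ := Submodule.mem_span_singleton.mp hx1
    have h3 : y (c • a) = 0 := hle hx2
    rw [map_smul, ha, smul_eq_mul, mul_one] at h3
    rw [h3, zero_smul]
    exact zero_mem _
  have ha0 : a ≠ 0 := by rintro rfl; simp at ha
  have h := Submodule.rank_sup_add_rank_inf_eq (Submodule.span ℤ {a}) (Submodule.span ℤ G)
  rw [hinf, ← Submodule.span_union, Set.singleton_union] at h
  have h1 : Module.finrank ℤ (Submodule.span ℤ {a}) = 1 := by
    have := (LinearEquiv.toSpanNonzeroSingleton ℤ (Fin d → ℤ) a ha0).finrank_eq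
    simpa using this.symm
  rw [← Module.finrank_eq_rank, ← Module.finrank_eq_rank, ← Module.finrank_eq_rank, ← Module.finrank_eq_rank, h1] at h
  simp only [finrank_bot] at h
  norm_cast at h
  omega

lemma chain_of_dual {d k : ℕ} (A F : Finset (Fin d → ℤ)) (a : Fin k → (Fin d → ℤ))
    (y : Fin k → (Fin d → ℤ) →ₗ[ℤ] ℤ) (hFA : F ⊆ A) (haA : ∀ i, a i ∈ A)
    (hA : ∀ x ∈ A, x ∈ F ∨ ∃ i, x = a i) (hy : ∀ i j, y i (a j) = if i = j then 1 else 0)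
    (hyF : ∀ i, ∀ x ∈ F, y i x = 0) : 
    ∃ (t : ℕ) (c : ℕ → Finset (Fin d → ℤ)),
      c 0 = F ∧ c t = A ∧ (∀ i ≤ t, IsPrimeFace A (c i)) ∧
      ∀ i < t, c i ⊆ c (i + 1) ∧ (c (i + 1) \ c i).card = 1 ∧
        Module.finrank ℤ (Submodule.span ℤ ((c (i + 1) : Set (Fin d → ℤ)))) =
          Module.finrank ℤ (Submodule.span ℤ ((c i : Set (Fin d → ℤ)))) + 1 := by
  classical
  let c : ℕ → Finset (Fin d → ℤ) := fun i => F ∪ (Finset.univ.filter (fun j : Fin k => j.1 < i)).image a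
  have memc : ∀ i x, x ∈ c i ↔ x ∈ F ∨ ∃ j : Fin k, j.1 < i ∧ a j = x := by
    intro i x; simp [c]
  have hsucc : ∀ i (hi : i < k), c (i+1) = insert (a ⟨i, hi⟩) (c i) := by
    intro i hi
    ext x
    rw [Finset.mem_insert, memc, memc]
    constructor
    · rintro (h | ⟨j, hj, rfl⟩)
      · tauto
      · rcases Nat.lt_succ_iff_lt_or_eq.mp hj with h | h
        · exact Or.inr (Or.inr ⟨j, h, rfl⟩)
        · left; congr 1; exact Fin.ext h
    · rintro (rfl | h | ⟨j, hj, rfl⟩)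
      · exact Or.inr ⟨_, Nat.lt_succ_self _, rfl⟩
      · tauto
      · exact Or.inr ⟨j, by omega, rfl⟩
  have hyc : ∀ i (hi : i < k), ∀ x ∈ c i, y ⟨i, hi⟩ x = 0 := by
    intro i hi x hx
    rcases (memc i x).mp hx with h | ⟨j, hj, rfl⟩
    · exact hyF _ _ h
    · rw [hy, if_neg]; rintro rfl; exact lt_irrefl _ hj
  refine ⟨k, c, ?_, ?_, ?_, ?_⟩
  · ext x; simp [memc]
  · ext x
    rw [memc]
    constructor
    · rintro (h | ⟨j, -, rfl⟩)
      · exact hFA h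
      · exact haA j
    · intro h
      rcases hA x h with h | ⟨i, rfl⟩
      · exact Or.inl h
      · exact Or.inr ⟨i, i.2, rfl⟩
  · intro i _
    have val : ∀ j, (∑ l ∈ Finset.univ.filter (fun l : Fin k => i ≤ l.1), y l) (a j) = if i ≤ j.1 then 1 else 0 := by
      intro j
      simp [LinearMap.sum_apply, hy, Finset.sum_ite_eq']
    have valF : ∀ x ∈ F, (∑ l ∈ Finset.univ.filter (fun l : Fin k => i ≤ l.1), y l) x = 0 := by
      intro x hx
      rw [LinearMap.sum_apply]
      exact Finset.sum_eq_zero fun l _ => hyF l x hx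
    refine ⟨?_, ∑ l ∈ Finset.univ.filter (fun l : Fin k => i ≤ l.1), y l, ?_, ?_⟩
    · intro x hx
      rcases (memc i x).mp hx with h | ⟨j, hj, rfl⟩
      · exact hFA h
      · exact haA j
    · intro x hx
      rcases hA x hx with h | ⟨j, rfl⟩
      · rw [valF x h]
      · rw [val]; split_ifs <;> norm_num
    · intro x hx
      constructor
      · intro h
        rcases (memc i x).mp h with h | ⟨j, hj, rfl⟩
        · exact valF x h
        · rw [val, if_neg (by omega)]
      · intro h
        rw [memc]
        rcases hA x hx with h' | ⟨j, rfl⟩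
        · exact Or.inl h'
        · refine Or.inr ⟨j, ?_, rfl⟩
          rw [val] at h
          by_contra hc
          rw [if_pos (by omega)] at h
          norm_num at h
  · intro i hi
    have hni : a ⟨i, hi⟩ ∉ c i := by
      intro h
      have := hyc i hi _ h
      simp [hy] at this
    rw [hsucc i hi]
    refine ⟨Finset.subset_insert _ _, ?_, ?_⟩
    · rw [Finset.insert_sdiff_of_notMem _ hni]; simp
    · rw [Finset.coe_insert]
      exact finrank_insert _ _ (y ⟨i, hi⟩) (fun g hg => hyc i hi g hg) (by simp [hy])

lemma simpVol_spec {d : ℕ} (G : Finset (Fin d → ℤ)) :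
    ∃ (ι : Type) (_ : Fintype ι) (b : Module.Basis ι ℤ (Submodule.span ℤ (G : Set (Fin d → ℤ)))),
      simpVol G = (Fintype.card ι).factorial * (volume (convexHull ℝ
        ((fun v : Submodule.span ℤ (G : Set (Fin d → ℤ)) => fun i => (b.repr v i : ℝ)) ''
          {v | (v : Fin d → ℤ) ∈ insert 0 (G : Set (Fin d → ℤ))}))).toReal := by
  classical
  have : Module.Finite ℤ (Submodule.span ℤ ((G : Set (Fin d → ℤ)))) :=
    Module.Finite.span_of_finite ℤ G.finite_toSet
  refine ⟨_, inferInstance, Module.Free.chooseBasis ℤ _, ?_⟩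
  unfold simpVol
  dsimp only
  rw [Module.finrank_eq_card_chooseBasisIndex]
  congr 4
  have hsub : insert 0 (G : Set (Fin d → ℤ)) ⊆ Submodule.span ℤ (G : Set (Fin d → ℤ)) :=
    Set.insert_subset (zero_mem _) Submodule.subset_span
  ext x
  constructor
  · rintro ⟨v, hv, rfl⟩
    exact ⟨⟨v, hsub hv⟩, hv, by simp only [dif_pos (show v ∈ Submodule.span ℤ (G : Set (Fin d → ℤ)) from hsub hv)]⟩
  · rintro ⟨v, hv, rfl⟩
    exact ⟨v, hv, by simp only [dif_pos v.2]⟩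

lemma vol_reindex {Z n m : Type} [AddCommGroup Z] [Fintype n] [Fintype m] (b : Module.Basis n ℤ Z)
    (e : n ≃ m) (s : Set Z) : 
    volume (convexHull ℝ ((fun v => fun i => ((b.reindex e).repr v i : ℝ)) '' s)) =
    volume (convexHull ℝ ((fun v => fun i => (b.repr v i : ℝ)) '' s)) := by
  have hp := volume_measurePreserving_piCongrLeft (fun _ : m => ℝ) e
  rw [← hp.measure_preimage_equiv]
  congr 1
  have h1 : ((fun v => fun i => ((b.reindex e).repr v i : ℝ)) '' s) =
      (LinearEquiv.funCongrLeft ℝ ℝ e.symm).toLinearMap '' ((fun v => fun i => (b.repr v i : ℝ)) '' s) := by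
    rw [Set.image_image]
    refine Set.image_congr fun v _ => ?_
    ext i
    simp [LinearEquiv.funCongrLeft_apply]
  rw [h1, ← LinearMap.image_convexHull]
  have h2 : ⇑(MeasurableEquiv.piCongrLeft (fun _ : m => ℝ) e) = ⇑(LinearEquiv.funCongrLeft ℝ ℝ e.symm).toLinearMap := by
    ext x i
    obtain ⟨j, rfl⟩ := e.surjective i
    rw [MeasurableEquiv.coe_piCongrLeft]
    simp [LinearEquiv.funCongrLeft_apply]
  rw [h2]
  exact Set.preimage_image_eq _ (LinearEquiv.injective _)

lemma core {Z ι : Type} [AddCommGroup Z] [Fintype ι] [DecidableEq ι] {k : ℕ}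
    (bA : Module.Basis (ι ⊕ Fin k) ℤ Z) (A F : Finset Z) (hFA : F ⊆ A)
    (hA : Submodule.span ℤ (A : Set Z) = ⊤) (P : Submodule ℤ Z) (hFP : ∀ x ∈ F, x ∈ P)
    (bF : Module.Basis ι ℤ P)
    (a : Fin k → Z) (ha : ∀ i, a i ∈ A)
    (hli : LinearIndependent ℤ (Sum.elim (fun j => (bF j : Z)) a))
    (hv : (Fintype.card ι).factorial * (volume (convexHull ℝ
        ((fun v : P => fun i => (bF.repr v i : ℝ)) '' {v | (v : Z) ∈ insert 0 (F : Set Z)}))).toReal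
      = (Fintype.card (ι ⊕ Fin k)).factorial * (volume (convexHull ℝ
        ((fun v : Z => fun i => (bA.repr v i : ℝ)) '' insert 0 (A : Set Z)))).toReal) :
    ∃ B : Module.Basis (ι ⊕ Fin k) ℤ Z, ⇑B = Sum.elim (fun j => (bF j : Z)) a ∧
      ∀ x ∈ A, x ∈ P ∨ ∃ i, x = a i := by
  set g : ι ⊕ Fin k → Z := Sum.elim (fun j => (bF j : Z)) a with hg
  set cF : P → ι → ℝ := fun v i => (bF.repr v i : ℝ) with hcF
  set cA : Z → ι ⊕ Fin k → ℝ := fun v i => (bA.repr v i : ℝ) with hcA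
  set XF : Set P := {v | (v : Z) ∈ insert 0 (F : Set Z)} with hXF
  set C := convexHull ℝ (cF '' XF) with hC
  set K := convexHull ℝ (cA '' insert 0 (A : Set Z)) with hK
  let cAl : Z →ₗ[ℤ] (ι ⊕ Fin k → ℝ) := 
    { toFun := cA
      map_add' := by intros; ext; simp [cA]
      map_smul' := by intros; ext; simp [cA] }
  have hcA0 : cA 0 = 0 := map_zero cAl
  have hcF0 : cF 0 = 0 := by ext; simp [cF]
  -- finiteness
  have hXFfin : (cF '' XF).Finite := by
    refine Set.Finite.image _ ?_
    exact ((F.finite_toSet.insert 0).preimage Subtype.val_injective.injOn)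
  have hKfin : (cA '' insert 0 (A : Set Z)).Finite := (A.finite_toSet.insert 0).image _
  have hKc : IsCompact K := hKfin.isCompact_convexHull (𝕜 := ℝ)
  have hCc : IsCompact C := hXFfin.isCompact_convexHull (𝕜 := ℝ)
  -- interior of K
  have hspan : Submodule.span ℝ (cA '' insert 0 (A : Set Z)) = ⊤ := by
    have h1 : ∀ z : Z, cA z ∈ Submodule.span ℝ (cA '' insert 0 (A : Set Z)) := by
      intro z
      have hz : z ∈ Submodule.span ℤ (A : Set Z) := hA ▸ Submodule.mem_top
      induction hz using Submodule.span_induction with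
      | mem x hx => exact Submodule.subset_span ⟨x, Or.inr hx, rfl⟩
      | zero => rw [hcA0]; exact zero_mem _
      | add x y _ _ h1 h2 => 
        have := map_add cAl x y
        change cA (x + y) = cA x + cA y at this
        rw [this]; exact add_mem h1 h2
      | smul c x _ h => 
        have := map_smul cAl c x
        change cA (c • x) = c • cA x at this
        rw [this]; exact zsmul_mem h c
    rw [eq_top_iff, ← (Pi.basisFun ℝ (ι ⊕ Fin k)).span_eq, Submodule.span_le]
    rintro _ ⟨i, rfl⟩
    have := h1 (bA i)
    have e : cA (bA i) = Pi.basisFun ℝ _ i := by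
      ext j
      simp [cA, Finsupp.single_apply, Pi.single_apply, eq_comm]
    exact e ▸ this
  have hKint : (interior K).Nonempty := by
    rw [hK, interior_convexHull_nonempty_iff_affineSpan_eq_top]
    have h0 : (0 : ι ⊕ Fin k → ℝ) ∈ affineSpan ℝ (cA '' insert 0 (A : Set Z)) :=
      subset_affineSpan ℝ _ ⟨0, Or.inl rfl, hcA0⟩
    have hne : ((affineSpan ℝ (cA '' insert 0 (A : Set Z)) : AffineSubspace ℝ (ι ⊕ Fin k → ℝ)) : Set (ι ⊕ Fin k → ℝ)).Nonempty := ⟨0, h0⟩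
    rw [← AffineSubspace.direction_eq_top_iff_of_nonempty hne, direction_affineSpan, eq_top_iff, ← hspan,
      Submodule.span_le]
    intro x hx
    have := vsub_mem_vectorSpan ℝ hx (show (0 : ι ⊕ Fin k → ℝ) ∈ cA '' insert 0 (A : Set Z) from ⟨0, Or.inl rfl, hcA0⟩)
    simpa using this
  have hKpos : 0 < volume K := 
    (isOpen_interior.measure_pos volume hKint).trans_le (measure_mono interior_subset)
  have hKtop : volume K ≠ ⊤ := hKc.measure_ne_top
  have hCtop : volume C ≠ ⊤ := hCc.measure_ne_top
  -- the map
  set M : Matrix (ι ⊕ Fin k) (ι ⊕ Fin k) ℤ := bA.toMatrix g with hM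
  set T : (ι ⊕ Fin k → ℝ) →ₗ[ℝ] (ι ⊕ Fin k → ℝ) := Matrix.toLin' (M.map (Int.cast : ℤ → ℝ)) with hT
  have hdetT : LinearMap.det T = (M.det : ℝ) := by
    rw [hT, LinearMap.det_toLin']
    exact (Int.cast_det M).symm
  have hTz : ∀ z : ι ⊕ Fin k → ℤ, T (fun i => (z i : ℝ)) = cA (∑ i, z i • g i) := by
    intro z
    ext i
    simp [hT, hcA, Matrix.toLin'_apply, Matrix.mulVec, dotProduct, hM, Module.Basis.toMatrix_apply, mul_comm]
  have hdet0 : M.det ≠ 0 := by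
    intro h0
    obtain ⟨z, hz0, hz⟩ := Matrix.exists_mulVec_eq_zero_iff.mpr h0
    apply hz0
    have h1 : ∑ i, z i • g i = 0 := by
      apply bA.repr.injective
      ext i
      have := congrFun hz i
      simp [Matrix.mulVec, dotProduct, hM, Module.Basis.toMatrix_apply] at this
      simp [← this, mul_comm]
    funext i
    exact Fintype.linearIndependent_iff.mp hli z h1 i
  -- join
  set X : Set (ι ⊕ Fin k → ℝ) := ((fun x => Sum.elim x 0) '' (cF '' XF)) ∪
    Set.range (fun i : Fin k => Pi.single (Sum.inr i) 1) with hX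
  set S := convexHull ℝ X with hS
  have hXfin : X.Finite := (hXFfin.image _).union (Set.finite_range _)
  have hSc : IsCompact S := hXfin.isCompact_convexHull (𝕜 := ℝ)
  have hSingle : ∀ i, (Pi.single (Sum.inr i) 1 : ι ⊕ Fin k → ℝ) ∈ S := 
    fun i => subset_convexHull ℝ _ (Or.inr ⟨i, rfl⟩)
  let inl : (ι → ℝ) →ₗ[ℝ] (ι ⊕ Fin k → ℝ) := 
    { toFun := fun x => Sum.elim x 0
      map_add' := by intros; ext i; rcases i with i | i <;> simp
      map_smul' := by intros; ext i; rcases i with i | i <;> simp }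
  have hCS : ∀ x ∈ C, Sum.elim x 0 ∈ S := by
    intro x hx
    have h1 : inl x ∈ inl '' C := ⟨x, hx, rfl⟩
    rw [hC, LinearMap.image_convexHull] at h1
    exact convexHull_mono Set.subset_union_left h1
  have hjoin := vol_join C S (convex_convexHull ℝ _) hSc.isClosed hCS hSingle
  have hle : volume K ≤ volume S := by
    refine le_trans (le_of_eq ?_) hjoin
    rw [← ENNReal.ofReal_toReal hKtop, ← ENNReal.ofReal_toReal hCtop, ← ENNReal.ofReal_mul (by positivity)]
    congr 1
    rw [Fintype.card_sum, Fintype.card_fin] at hv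
    have : ((Fintype.card ι + k).factorial : ℝ) ≠ 0 := by positivity
    field_simp
    linarith
  have hTsingle : ∀ i, T (Pi.single (Sum.inr i) 1) = cA (a i) := by
    intro i
    have := hTz (Pi.single (Sum.inr i) 1)
    rw [Finset.sum_eq_single (Sum.inr i)] at this
    · simp only [Pi.single_eq_same, one_smul] at this
      rw [show a i = g (Sum.inr i) from rfl, ← this]
      congr 1
      ext j
      simp only [Pi.single_apply]
      split_ifs <;> simp
    · intro j _ hj; simp [hj]
    · simp
  have hTF : ∀ v : P, T (Sum.elim (cF v) 0) = cA v := by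
    intro v
    have h1 := hTz (Sum.elim (fun j => bF.repr v j) 0)
    have h2 : ∑ i, (Sum.elim (fun j => bF.repr v j) 0 : ι ⊕ Fin k → ℤ) i • g i = v := by
      rw [Fintype.sum_sum_type]
      simp only [Sum.elim_inl, Sum.elim_inr, Pi.zero_apply, zero_smul, Finset.sum_const_zero, add_zero, hg]
      have h5 := congrArg (Submodule.subtype _) (bF.sum_repr v)
      rw [map_sum] at h5
      simp only [map_smul] at h5
      exact h5
    rw [h2] at h1
    rw [← h1]
    congr 1
    ext i
    rcases i with i | i <;> simp [hcF]
  have hTSK : T '' S ⊆ K := by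
    rw [hS, LinearMap.image_convexHull]
    refine convexHull_mono ?_
    rintro _ ⟨x, hx, rfl⟩
    rcases hx with ⟨_, ⟨v, hvX, rfl⟩, rfl⟩ | ⟨i, rfl⟩
    · refine ⟨v, ?_, (hTF v).symm⟩
      rcases hvX with h | h
      · exact Or.inl h
      · exact Or.inr (hFA h)
    · exact ⟨a i, Or.inr (ha i), (hTsingle i).symm⟩
  have hvolTS : volume (T '' S) = ENNReal.ofReal |(M.det : ℝ)| * volume S := by
    rw [Measure.addHaar_image_linearMap, hdetT]
  have habs1 : (1 : ℝ) ≤ |(M.det : ℝ)| := by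
    have := Int.one_le_abs hdet0
    exact_mod_cast this
  have hSle : volume S ≤ volume (T '' S) := by
    rw [hvolTS]
    calc volume S = 1 * volume S := (one_mul _).symm
      _ ≤ _ := by gcongr; simpa using habs1
  have hSK : volume S = volume K := le_antisymm (hSle.trans (measure_mono hTSK)) hle
  have habs : |(M.det : ℝ)| ≤ 1 := by
    have h1 : ENNReal.ofReal |(M.det : ℝ)| * volume K ≤ 1 * volume K := by
      rw [one_mul]
      nth_rw 1 [← hSK]
      rw [← hvolTS]
      exact measure_mono hTSK
    have h2 := (ENNReal.mul_le_mul_iff_left hKpos.ne' hKtop).mp h1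
    simpa using h2
  have hunit : IsUnit (bA.det g) := by
    rw [Module.Basis.det_apply, ← hM, Int.isUnit_iff_abs_eq]
    exact_mod_cast le_antisymm habs habs1
  have hbasis := (Module.Basis.is_basis_iff_det bA).mpr hunit
  let B : Module.Basis (ι ⊕ Fin k) ℤ Z := Module.Basis.mk hbasis.1 hbasis.2.ge
  have hB : ⇑B = g := Module.Basis.coe_mk _ _
  have hKS : K ⊆ T '' S := convex_eq _ _ (hSc.image (LinearMap.continuous_of_finiteDimensional T)).isClosed hTSK
    (convex_convexHull ℝ _) hKint (measure_ne_top_of_subset hTSK hKtop) (hle.trans hSle)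
  have hTinj : Function.Injective T := by
    have hu : IsUnit (LinearMap.det T) := by
      rw [hdetT, isUnit_iff_ne_zero]; exact_mod_cast hdet0
    intro p q hpq
    exact (LinearMap.equivOfIsUnitDet hu).injective (by simpa only [LinearMap.equivOfIsUnitDet_apply] using hpq)
  refine ⟨B, hB, ?_⟩
  intro x hx
  -- integral coordinates
  set z : ι ⊕ Fin k → ℤ := fun i => B.repr x i with hz
  have hxz : ∑ i, z i • g i = x := by rw [← hB]; exact B.sum_repr x
  have hzS : (fun i => (z i : ℝ)) ∈ S := by
    have h1 : cA x ∈ K := subset_convexHull ℝ _ ⟨x, Or.inr hx, rfl⟩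
    obtain ⟨s, hs, hse⟩ := hKS h1
    rw [← hxz, ← hTz] at hse
    rwa [← hTinj hse]
  -- bound
  obtain ⟨R, hR⟩ : ∃ R : ℝ, ∀ x ∈ cF '' XF, ∀ j, |x j| ≤ R := by
    obtain ⟨R, hR⟩ := hXFfin.isBounded.exists_norm_le
    exact ⟨R, fun x hx j => (norm_le_pi_norm x j).trans (hR x hx)⟩
  have hR0 : ∀ j : ι, 0 ≤ R := fun j => (abs_nonneg _).trans
    (hR (cF 0) ⟨0, Or.inl rfl, rfl⟩ j)
  let Q : Set (ι ⊕ Fin k → ℝ) := {s | (∀ i, 0 ≤ s (Sum.inr i)) ∧ ∑ i : Fin k, s (Sum.inr i) ≤ 1 ∧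
    ∀ j : ι, s (Sum.inl j) + R * ∑ i : Fin k, s (Sum.inr i) ≤ R ∧ - s (Sum.inl j) + R * ∑ i : Fin k, s (Sum.inr i) ≤ R}
  have hQ : Convex ℝ Q := by
    rintro s ⟨hs1, hs2, hs3⟩ t ⟨ht1, ht2, ht3⟩ p q hp hq hpq
    have hsum : ∑ i : Fin k, (p • s + q • t) (Sum.inr i) = p * ∑ i : Fin k, s (Sum.inr i) + q * ∑ i : Fin k, t (Sum.inr i) := by
      simp [Finset.sum_add_distrib, Finset.mul_sum]
    refine ⟨fun i => ?_, ?_, fun j => ?_⟩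
    · have := hs1 i; have := ht1 i
      simp only [Pi.add_apply, Pi.smul_apply, smul_eq_mul]
      positivity
    · rw [hsum]; nlinarith
    · rw [hsum]
      simp only [Pi.add_apply, Pi.smul_apply, smul_eq_mul]
      have e : R = p * R + q * R := by rw [← add_mul, hpq, one_mul]
      constructor
      · have h1 := mul_le_mul_of_nonneg_left (hs3 j).1 hp
        have h2 := mul_le_mul_of_nonneg_left (ht3 j).1 hq
        linarith
      · have h1 := mul_le_mul_of_nonneg_left (hs3 j).2 hp
        have h2 := mul_le_mul_of_nonneg_left (ht3 j).2 hq
        linarith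
  have hXQ : X ⊆ Q := by
    rintro _ (⟨y, hy, rfl⟩ | ⟨i, rfl⟩)
    · refine ⟨by simp, by simp, fun j => ?_⟩
      have := abs_le.mp (hR y hy j)
      simp only [Sum.elim_inl, Sum.elim_inr, Pi.zero_apply, Finset.sum_const_zero, mul_zero, add_zero]
      constructor <;> linarith
    · have hs : ∑ i' : Fin k, (Pi.single (Sum.inr i) 1 : ι ⊕ Fin k → ℝ) (Sum.inr i') = 1 := by
        simp [Pi.single_apply]
      refine ⟨fun i' => ?_, hs.le, fun j => ?_⟩
      · simp only [Pi.single_apply]; split_ifs <;> norm_num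
      · simp only [hs]; simp
  have hzQ := convexHull_min hXQ hQ hzS
  obtain ⟨hq1, hq2, hq3⟩ := hzQ
  simp only at hq1 hq2
  have hq1' : ∀ i, 0 ≤ z (Sum.inr i) := fun i => by exact_mod_cast hq1 i
  have hq2' : ∑ i : Fin k, z (Sum.inr i) ≤ 1 := by exact_mod_cast hq2
  by_cases hall : ∀ i, z (Sum.inr i) = 0
  · left
    rw [← hxz, Fintype.sum_sum_type]
    refine P.add_mem (P.sum_mem fun j _ => P.smul_mem _ (bF j).2) (P.sum_mem fun i _ => ?_)
    rw [hall, zero_smul]; exact zero_mem _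
  · right
    push Not at hall
    obtain ⟨i, hi⟩ := hall
    have hi1 : 1 ≤ z (Sum.inr i) := by have := hq1' i; omega
    have hsplit := Finset.add_sum_erase Finset.univ (fun i => z (Sum.inr i)) (Finset.mem_univ i)
    have hnn : 0 ≤ ∑ l ∈ Finset.univ.erase i, z (Sum.inr l) := Finset.sum_nonneg fun l _ => hq1' l
    have hi2 : z (Sum.inr i) = 1 := by omega
    have hrest : ∑ l ∈ Finset.univ.erase i, z (Sum.inr l) = 0 := by omega
    have hrest' : ∀ l, l ≠ i → z (Sum.inr l) = 0 := fun l hl =>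
      (Finset.sum_eq_zero_iff_of_nonneg fun l _ => hq1' l).mp hrest l (by simp [hl])
    have htot : ∑ l : Fin k, (z (Sum.inr l) : ℝ) = 1 := by
      have : ∑ l : Fin k, z (Sum.inr l) = 1 := by omega
      exact_mod_cast this
    have hinl : ∀ j, z (Sum.inl j) = 0 := by
      intro j
      have h3 := hq3 j
      simp only [htot] at h3
      have : (z (Sum.inl j) : ℝ) = 0 := by linarith [h3.1, h3.2]
      exact_mod_cast this
    refine ⟨i, ?_⟩
    rw [← hxz, Fintype.sum_sum_type, Finset.sum_eq_zero (fun j _ => by rw [hinl, zero_smul]), zero_add,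
      Finset.sum_eq_single i (fun l _ hl => by rw [hrest' l hl, zero_smul]) (by simp), hi2, one_smul]
    rfl

/-- if `A ⊆ ℤ^d` is finite and pointed with `ℤA = ℤ^d`, `F` is a prime face
of `A`, and the simplicial volume of `F` in `ℤF` equals the simplicial volume of `A` in
`ℤ^d`, then `A` is an iterated pyramid over `F`: there is a chain of prime faces
`F = F_0 ⊆ F_1 ⊆ ⋯ ⊆ F_t = A` with `|F_{i+1} ∖ F_i| = 1` and
`rank ℤF_{i+1} = rank ℤF_i + 1` for all `i`. -/
theorem iterated_pyramid_of_eq_simpVol {d : ℕ} (A F : Finset (Fin d → ℤ))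
    (hpointed : ∀ v ∈ AddSubmonoid.closure (A : Set (Fin d → ℤ)),
      -v ∈ AddSubmonoid.closure (A : Set (Fin d → ℤ)) → v = 0)
    (hZA : Submodule.span ℤ (A : Set (Fin d → ℤ)) = ⊤)
    (hface : IsPrimeFace A F)
    (hvol : simpVol F = simpVol A) :
    ∃ (t : ℕ) (c : ℕ → Finset (Fin d → ℤ)),
      c 0 = F ∧ c t = A ∧ (∀ i ≤ t, IsPrimeFace A (c i)) ∧
      ∀ i < t, c i ⊆ c (i + 1) ∧ (c (i + 1) \ c i).card = 1 ∧
        Module.finrank ℤ (Submodule.span ℤ ((c (i + 1) : Set (Fin d → ℤ)))) =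
          Module.finrank ℤ (Submodule.span ℤ ((c i : Set (Fin d → ℤ)))) + 1 := by
  classical
  obtain ⟨hFA, ℓ, hℓ0, hℓ⟩ := hface
  obtain ⟨n, _, bA0, hA0⟩ := simpVol_spec A
  obtain ⟨ι, _, bF, hF0⟩ := simpVol_spec F
  let bA1 : Module.Basis n ℤ (Fin d → ℤ) := bA0.map (LinearEquiv.ofTop _ hZA)
  have hw : LinearIndependent ℤ (fun j => (bF j : Fin d → ℤ)) :=
    bF.linearIndependent.map' (Submodule.subtype _) (Submodule.ker_subtype _)
  obtain ⟨k, a, ha, hli, ⟨e⟩⟩ := exists_ext bA1 A hZA _ hw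
  let bA := bA1.reindex e
  have hvolA : volume (convexHull ℝ
      ((fun v : Fin d → ℤ => fun i => (bA.repr v i : ℝ)) '' insert 0 (A : Set (Fin d → ℤ)))) =
      volume (convexHull ℝ
        ((fun v : Submodule.span ℤ (A : Set (Fin d → ℤ)) => fun i => (bA0.repr v i : ℝ)) ''
          {v | (v : Fin d → ℤ) ∈ insert 0 (A : Set (Fin d → ℤ))})) := by
    rw [vol_reindex]
    congr 2
    ext x
    constructor
    · rintro ⟨v, hv, rfl⟩
      exact ⟨⟨v, hZA ▸ Submodule.mem_top⟩, hv, rfl⟩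
    · rintro ⟨v, hv, rfl⟩
      exact ⟨v, hv, rfl⟩
  obtain ⟨B, hB, hAall⟩ := core bA A F hFA hZA _ (fun x hx => Submodule.subset_span hx) bF a ha hli (by
    rw [hvolA, ← hF0, hvol, hA0, Fintype.card_congr e])
  have hspan0 : ∀ x ∈ Submodule.span ℤ (F : Set (Fin d → ℤ)), ℓ x = 0 := by
    have : Submodule.span ℤ (F : Set (Fin d → ℤ)) ≤ LinearMap.ker ℓ :=
      Submodule.span_le.mpr fun x hx => (hℓ x (hFA hx)).mp hx
    exact fun x hx => this hx
  refine chain_of_dual A F a (fun i => B.coord (Sum.inr i)) hFA ha ?_ ?_ ?_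
  · intro x hx
    rcases hAall x hx with h | h
    · exact Or.inl ((hℓ x hx).mpr (hspan0 x h))
    · exact Or.inr h
  · intro i j
    have : a j = B (Sum.inr j) := by rw [hB]; rfl
    rw [this, Module.Basis.coord_apply, B.repr_self, Finsupp.single_apply]
    simp [eq_comm]
  · intro i x hx
    have hxP : x ∈ Submodule.span ℤ (F : Set (Fin d → ℤ)) := Submodule.subset_span hx
    have h1 : x = ∑ j, bF.repr ⟨x, hxP⟩ j • B (Sum.inl j) := by
      have := congrArg (Submodule.subtype _) (bF.sum_repr ⟨x, hxP⟩)
      rw [map_sum] at this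
      simp only [map_smul] at this
      rw [hB]
      exact this.symm
    rw [h1, map_sum]
    refine Finset.sum_eq_zero fun j _ => ?_
    rw [map_smul, Module.Basis.coord_apply, B.repr_self, Finsupp.single_apply]
    simp
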